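/- Let d ≥ 2 be an integer, n a prime, X = (ℤ/nℤ)^d, η = e^{2π√−1/n}, and let w_0, …, w_d be nonnegative reals with Σ w_i = 1; define κ_j = (n−1)^j C(d,j), ρ_i = Σ_{j=0}^d (w_j/κ_j) K_j(i), and the coin matrix C_{y,y'} = 2√((w_{|y|}/κ_{|y|})(w_{|y'|}/κ_{|y'|})) − δ_{y,y'}. Let ψ̃_{y,ξ}(t), for y, ξ ∈ X and t ∈ ℕ, satisfy the decoupled system ψ̃_{y,ξ}(t+1) = η^{−ξ·y} Σ_{y'∈X} C_{y,y'} ψ̃_{y',ξ}(t) with initial condition ψ̃_{y,ξ}(0) = n^{−d/2}·√(w_{|y|}/κ_{|y|}). Fix ξ ∈ X \ {0} and assume −1/(n−1) < ρ_{|ξ|} < 1. Let μ^{(1)}, …, μ^{(n)} be the complex zeros (with multiplicity) of the polynomial (−z)^n + 2ρ_{|ξ|}·Σ_{i=1}^{n−1}(−z)^i + 1, and assume they are pairwise distinct. Then for all t ≥ 0 and all y ∈ X, ψ̃_{y,ξ}(t) = [ (−η^{−(ξ·y)})^t · (1 − Σ_{i=1}^n 2c^{(i)}/(1 + η^{ξ·y}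 μ^{(i)})) + Σ_{i=1}^n 2c^{(i)} (μ^{(i)})^t/(1 + η^{ξ·y} μ^{(i)}) ] · ψ̃_{y,ξ}(0), where c^{(i)} = [ (μ^{(i)})^n + (1−ρ_{|ξ|})(μ^{(i)})^{n−1} − ρ_{|ξ|}(−1)^n ] / [ n(μ^{(i)})^n + (n − 2ρ_{|ξ|}(n−1))(μ^{(i)})^{n−1} − 2ρ_{|ξ|}(−1)^n Σ_{k=0}^{n−2} (−μ^{(i)})^k ]. Moreover, ψ̃_{y,0}(t) = ψ̃_{y,0}(0) for all t ≥ 0. -/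

import Mathlib

/-- The Krawtchouk polynomial value
`K_i(j) = Σ_{l=0}^{i} (-1)^l (n-1)^{i-l} C(j,l) C(d-j, i-l)`. -/
noncomputable def kraw (n d i j : ℕ) : ℝ :=
  ∑ l ∈ Finset.range (i + 1),
    (-1 : ℝ) ^ l * ((n - 1 : ℕ) : ℝ) ^ (i - l) * (j.choose l) * ((d - j).choose (i - l))

/-- `κ_j = (n-1)^j C(d,j)`. -/
noncomputable def kap (n d j : ℕ) : ℝ := ((n - 1 : ℕ) : ℝ) ^ j * (d.choose j)

/-- The coin matrix `C_{y,y'} = 2√((w_{|y|}/κ_{|y|})(w_{|y'|}/κ_{|y'|})) - δ_{y,y'}`. -/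
noncomputable def coin (n d : ℕ) (w : ℕ → ℝ) (y y' : Fin d → ZMod n) : ℝ :=
  2 * Real.sqrt ((w (hammingNorm y) / kap n d (hammingNorm y)) *
      (w (hammingNorm y') / kap n d (hammingNorm y'))) - if y = y' then 1 else 0

/-- The coefficient `c^{(i)}` of Proposition 5.4 / Theorem 5.1:
`c = (μ^n + (1-ρ)μ^{n-1} - ρ(-1)^n) /
  (nμ^n + (n - 2ρ(n-1))μ^{n-1} - 2ρ(-1)^n Σ_{k=0}^{n-2}(-μ)^k)`. -/
noncomputable def cCoef (n : ℕ) (ρ : ℝ) (μ : ℂ) : ℂ :=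
  (μ ^ n + (1 - (ρ : ℂ)) * μ ^ (n - 1) - (ρ : ℂ) * (-1 : ℂ) ^ n) /
    ((n : ℂ) * μ ^ n + ((n : ℂ) - 2 * (ρ : ℂ) * ((n : ℂ) - 1)) * μ ^ (n - 1) -
      2 * (ρ : ℂ) * (-1 : ℂ) ^ n * ∑ k ∈ Finset.range (n - 1), (-μ) ^ k)

/-!
For fixed `ξ` the evolution matrix is `U = D⁻¹ (2 u uᵀ - 1)`, where `D` is the diagonal matrix of
the `n`-th roots of unity `z_y = η^{ξ·y}` and `u_y² = w_{|y|} / κ_{|y|}`, so that `∑ u_y² = 1`. If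
`∑ u_y² / (1 + z_y μ) = 1 / 2`, then `y ↦ u_y / (1 + z_y μ)` is an eigenvector of `U` with
eigenvalue `μ`. Expanding geometrically and using `z_y ^ n = 1`, the sum is determined by the
moments `∑ u_y² z_y ^ k` for `0 < k < n`. These are the eigenvalues of the random walk at `k ξ`,
and they all equal `ρ_{|ξ|}` because `n` is prime; so the condition on `μ` is the given polynomial
equation.

The coefficients `2 c^{(i)}` arise as residues: if `P` is monic with zeros `-μ^{(i)}`, a polynomial
`N` of degree less than `n` satisfies `2 x N(x) = P(x)` at each `n`-th root of unity `x`, so the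
partial fraction expansion of `N / P` at `z_y⁻¹` gives `∑ 2 c^{(i)} / (1 + z_y μ^{(i)}) = 1` for
every `y`. This expands `u` in eigenvectors, and it makes the term `(-z_y⁻¹) ^ t` disappear from
the solution.
-/

section Krawtchouk

open Finset Polynomial

lemma coeff_one_add_C_mul_X_pow {R : Type*} [CommSemiring R] (a : R) (m k : ℕ) :
    ((1 + C a * X) ^ m).coeff k = a ^ k * m.choose k := by
  have hcomp : (1 + C a * X) ^ m = ((1 + X) ^ m).comp (C a * X) := by simp
  rw [hcomp, comp_C_mul_X_coeff, coeff_one_add_X_pow, mul_comm]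

lemma coeff_krawtchouk_generating_function (n d i j : ℕ) :
    ((1 - X) ^ i * (1 + C ((n - 1 : ℕ) : ℂ) * X) ^ (d - i)).coeff j = (kraw n d j i : ℂ) := by
  have hneg : (1 - X : ℂ[X]) = 1 + C (-1) * X := by simp [sub_eq_add_neg]
  simp only [hneg, coeff_mul, coeff_one_add_C_mul_X_pow, kraw,
    Nat.sum_antidiagonal_eq_sum_range_succ_mk]
  push_cast
  exact sum_congr rfl fun l _ ↦ by ring

lemma kraw_zero_right (n d j : ℕ) : kraw n d j 0 = kap n d j := by
  rw [kraw, kap, sum_eq_single_of_mem 0 (by simp)]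
  · simp
  · intro l _ hl
    simp [Nat.choose_eq_zero_of_lt (Nat.pos_of_ne_zero hl)]

lemma kap_pos {n d j : ℕ} (hn : 1 < n) (hj : j ≤ d) : 0 < kap n d j := by
  have hn' : 0 < n - 1 := Nat.sub_pos_of_lt hn
  have hchoose : 0 < d.choose j := Nat.choose_pos hj
  unfold kap
  positivity

lemma addChar_map_sum {A M ι : Type*} [AddCommMonoid A] [CommMonoid M] (χ : AddChar A M)
    (s : Finset ι) (f : ι → A) : χ (∑ i ∈ s, f i) = ∏ i ∈ s, χ (f i) :=
  map_prod χ.toMonoidHom (fun i ↦ Multiplicative.ofAdd (f i)) s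

variable {n d : ℕ} [NeZero n]

lemma sum_C_stdAddChar_mul_ite (b : ZMod n) :
    ∑ x : ZMod n, C (ZMod.stdAddChar (b * x)) * (if x ≠ 0 then X else 1) =
      if b ≠ 0 then 1 - X else 1 + C ((n - 1 : ℕ) : ℂ) * X := by
  have hsplit (x : ZMod n) : (C (ZMod.stdAddChar (b * x)) * (if x ≠ 0 then X else 1) : ℂ[X]) =
      C (ZMod.stdAddChar (b * x)) * X + if x = 0 then 1 - X else 0 := by
    by_cases hx : x = 0 <;> simp [hx]
  have horth := AddChar.sum_mulShift b (ZMod.isPrimitive_stdAddChar n)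
  simp_rw [mul_comm _ b] at horth
  simp_rw [hsplit]
  rw [sum_add_distrib, ← sum_mul, ← map_sum, horth, sum_ite_eq' univ]
  by_cases hb : b = 0
  · have hcast : ((n - 1 : ℕ) : ℂ) = n - 1 := by simp [Nat.cast_pred (NeZero.pos n)]
    simp only [hb, hcast, ZMod.card, map_natCast, map_sub, map_one, mem_univ, ne_eq,
      not_true_eq_false, if_true, if_false]
    ring
  · simp [hb]

lemma sum_C_stdAddChar_mul_X_pow_hammingNorm (ξ : Fin d → ZMod n) :
    ∑ y : Fin d → ZMod n, C (ZMod.stdAddChar (ξ ⬝ᵥ y)) * X ^ hammingNorm y =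
      (1 - X) ^ hammingNorm ξ * (1 + C ((n - 1 : ℕ) : ℂ) * X) ^ (d - hammingNorm ξ) := by
  have hfactor (y : Fin d → ZMod n) :
      (C (ZMod.stdAddChar (ξ ⬝ᵥ y)) * X ^ hammingNorm y : ℂ[X]) =
        ∏ i, C (ZMod.stdAddChar (ξ i * y i)) * (if y i ≠ 0 then X else 1) := by
    rw [prod_mul_distrib, dotProduct, addChar_map_sum, map_prod, prod_ite]
    simp [hammingNorm]
  have hzeros : #{i | ¬ ξ i ≠ 0} = d - hammingNorm ξ := by
    have := card_filter_add_card_filter_not (s := (univ : Finset (Fin d))) (fun i ↦ ξ i ≠ 0)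
    rw [card_univ, Fintype.card_fin] at this
    exact (Nat.sub_eq_of_eq_add' this.symm).symm
  simp_rw [hfactor]
  rw [← Fintype.prod_sum fun i (x : ZMod n) ↦
    (C (ZMod.stdAddChar (ξ i * x)) * (if x ≠ 0 then X else 1) : ℂ[X])]
  simp_rw [sum_C_stdAddChar_mul_ite]
  rw [prod_ite, prod_const, prod_const, hzeros, hammingNorm]

lemma sum_stdAddChar_dotProduct_hammingNorm_eq (ξ : Fin d → ZMod n) (j : ℕ) :
    ∑ y : Fin d → ZMod n with hammingNorm y = j, ZMod.stdAddChar (ξ ⬝ᵥ y) =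
      (kraw n d j (hammingNorm ξ) : ℂ) := by
  rw [← coeff_krawtchouk_generating_function, ← sum_C_stdAddChar_mul_X_pow_hammingNorm]
  simp [finsetSum_coeff, coeff_X_pow, sum_filter, eq_comm]

end Krawtchouk

section HammingWalk

open Finset

/-- The probability `w_{|y|} / κ_{|y|}` that one step of the random walk on the Hamming graph
is a translation by `y`. -/
noncomputable def stepProb (n d : ℕ) (w : ℕ → ℝ) (y : Fin d → ZMod n) : ℝ :=
  w (hammingNorm y) / kap n d (hammingNorm y)

/-- The eigenvalue `ρ_i` of the random walk on the Hamming graph. -/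
noncomputable def walkEigenvalue (n d : ℕ) (w : ℕ → ℝ) (i : ℕ) : ℝ :=
  ∑ j ∈ range (d + 1), w j / kap n d j * kraw n d j i

/-- The root of unity `η^{ξ·y}`. -/
noncomputable def phase {n d : ℕ} [NeZero n] (ξ y : Fin d → ZMod n) : ℂ :=
  ZMod.stdAddChar (ξ ⬝ᵥ y)

/-- The unit vector `y ↦ √(w_{|y|} / κ_{|y|})` about which the coin matrix reflects. -/
noncomputable def amplitude (n d : ℕ) (w : ℕ → ℝ) (y : Fin d → ZMod n) : ℂ :=
  (√(stepProb n d w y) : ℝ)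

variable {n d : ℕ} {w : ℕ → ℝ}

lemma hammingNorm_le_dim (y : Fin d → ZMod n) : hammingNorm y ≤ d := by
  simpa using hammingNorm_le_card_fintype (x := y)

lemma stepProb_nonneg (hn : 1 < n) (hw : ∀ i ∈ range (d + 1), 0 ≤ w i) (y : Fin d → ZMod n) :
    0 ≤ stepProb n d w y :=
  div_nonneg (hw _ (mem_range_succ_iff.2 (hammingNorm_le_dim y)))
    (kap_pos hn (hammingNorm_le_dim y)).le

lemma amplitude_sq (hn : 1 < n) (hw : ∀ i ∈ range (d + 1), 0 ≤ w i) (y : Fin d → ZMod n) :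
    amplitude n d w y ^ 2 = stepProb n d w y := by
  rw [amplitude, ← Complex.ofReal_pow, Real.sq_sqrt (stepProb_nonneg hn hw y)]

lemma coin_eq_amplitude (hn : 1 < n) (hw : ∀ i ∈ range (d + 1), 0 ≤ w i)
    (y y' : Fin d → ZMod n) :
    (coin n d w y y' : ℂ) =
      2 * (amplitude n d w y * amplitude n d w y') - if y = y' then 1 else 0 := by
  have hsqrt : coin n d w y y' =
      2 * (√(stepProb n d w y) * √(stepProb n d w y')) - if y = y' then 1 else 0 := by
    rw [← Real.sqrt_mul (stepProb_nonneg hn hw y)]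
    rfl
  rw [hsqrt, amplitude, amplitude]
  split_ifs <;> simp

lemma walkEigenvalue_zero (hn : 1 < n) :
    walkEigenvalue n d w 0 = ∑ i ∈ range (d + 1), w i := by
  refine sum_congr rfl fun j hj ↦ ?_
  rw [kraw_zero_right, div_mul_cancel₀ _ (kap_pos hn (mem_range_succ_iff.1 hj)).ne']

variable [NeZero n]

lemma exp_pow_val_eq_stdAddChar (k : ZMod n) :
    Complex.exp (2 * Real.pi * Complex.I / n) ^ k.val = ZMod.stdAddChar k := by
  rw [ZMod.stdAddChar_apply, ZMod.toCircle_apply, ← Complex.exp_nat_mul]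
  congr 1
  ring

lemma phase_pow_card (ξ y : Fin d → ZMod n) : phase ξ y ^ n = 1 := by
  rw [phase, ← AddChar.map_nsmul_eq_pow]
  simp

lemma phase_zero : phase (0 : Fin d → ZMod n) = 1 := by
  ext y
  simp [phase]

lemma phase_pow (ξ y : Fin d → ZMod n) (k : ℕ) :
    phase ξ y ^ k = phase ((k : ZMod n) • ξ) y := by
  rw [phase, phase, smul_dotProduct, ← AddChar.map_nsmul_eq_pow, nsmul_eq_mul, smul_eq_mul]

lemma sum_stepProb_mul_phase (ξ : Fin d → ZMod n) :
    ∑ y, (stepProb n d w y : ℂ) * phase ξ y = walkEigenvalue n d w (hammingNorm ξ) := by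
  rw [← sum_fiberwise_of_maps_to (t := range (d + 1)) (g := hammingNorm)
    fun y _ ↦ mem_range_succ_iff.2 (hammingNorm_le_dim y), walkEigenvalue, Complex.ofReal_sum]
  refine sum_congr rfl fun j _ ↦ ?_
  rw [Complex.ofReal_mul, ← sum_stdAddChar_dotProduct_hammingNorm_eq, mul_sum]
  refine sum_congr rfl fun y hy ↦ ?_
  rw [stepProb, phase, (mem_filter.1 hy).2]

lemma sum_stepProb (hn : 1 < n) (hsum : ∑ i ∈ range (d + 1), w i = 1) :
    ∑ y, (stepProb n d w y : ℂ) = 1 := by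
  have h := sum_stepProb_mul_phase (w := w) (0 : Fin d → ZMod n)
  simpa only [phase_zero, Pi.one_apply, mul_one, hammingNorm_zero, walkEigenvalue_zero hn, hsum,
    Complex.ofReal_one] using h

/-- Multiplication by a unit of `ZMod n` preserves the Hamming weight. -/
lemma sum_stepProb_mul_phase_pow [Fact n.Prime] (ξ : Fin d → ZMod n) {k : ℕ}
    (hk : k ∈ Icc 1 (n - 1)) :
    ∑ y, (stepProb n d w y : ℂ) * phase ξ y ^ k = walkEigenvalue n d w (hammingNorm ξ) := by
  have hk0 : (k : ZMod n) ≠ 0 := by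
    rw [mem_Icc] at hk
    rw [Ne, ZMod.natCast_eq_zero_iff]
    exact Nat.not_dvd_of_pos_of_lt hk.1 (by lia)
  simp_rw [phase_pow]
  rw [sum_stepProb_mul_phase, hammingNorm_smul fun _ ↦ IsSMulRegular.of_ne_zero hk0]

end HammingWalk

section CharacteristicPolynomial

open Finset Polynomial

lemma sum_range_eq_add_sum_Icc {M : Type*} [AddCommMonoid M] {n : ℕ} (hn : n ≠ 0) (f : ℕ → M) :
    ∑ i ∈ range n, f i = f 0 + ∑ i ∈ Icc 1 (n - 1), f i := by
  rw [sum_range_eq_add_Ico f (Nat.pos_of_ne_zero hn),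
    Icc_sub_one_right_eq_Ico_of_not_isMin (by simpa using hn)]

lemma sum_eval_div_derivative_nodal_div_sub {K ι : Type*} [Field K] {s : Finset ι}
    {v : ι → K} (hv : Set.InjOn v s) {f : K[X]} (hf : f.degree < #s) {x : K}
    (hx : ∀ i ∈ s, x ≠ v i) :
    ∑ i ∈ s, f.eval (v i) / (derivative (Lagrange.nodal s v)).eval (v i) / (x - v i) =
      f.eval x / (Lagrange.nodal s v).eval x := by
  classical
  have h := Lagrange.eval_interpolate_not_at_node (fun i ↦ f.eval (v i)) hx
  rw [← Lagrange.eq_interpolate hv hf] at h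
  rw [h, mul_div_cancel_left₀ _ (Lagrange.eval_nodal_not_at_node hx)]
  refine sum_congr rfl fun i hi ↦ ?_
  rw [Lagrange.nodalWeight_eq_eval_derivative_nodal hi]
  ring

variable {K : Type*} [Field K]

/-- The monic polynomial whose zeros are the `-μ^{(i)}`; the change of sign removes all powers
of `-1`. -/
noncomputable def walkPoly (n : ℕ) (r : K) : K[X] :=
  X ^ n + C (2 * r) * ∑ i ∈ Icc 1 (n - 1), X ^ i + 1

/-- The polynomial of degree less than `n` for which `2 * X * walkNumerator n r` agrees with
`walkPoly n r` at the `n`-th roots of unity. -/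
noncomputable def walkNumerator (n : ℕ) (r : K) : K[X] :=
  C (1 - r) * X ^ (n - 1) + C r * ∑ i ∈ range n, X ^ i

variable {n : ℕ} {r : K}

lemma walkPoly_eq_geom_sum (hn : n ≠ 0) :
    walkPoly n r = X ^ n + C (2 * r) * (∑ i ∈ range n, X ^ i - 1) + 1 := by
  rw [walkPoly, sum_range_eq_add_sum_Icc hn, pow_zero, add_sub_cancel_left]

lemma degree_walkNumerator_lt (hn : n ≠ 0) : (walkNumerator n r).degree < n := by
  have hX {i : ℕ} (hi : i < n) : (X ^ i : K[X]) ∈ degreeLT K n := by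
    rw [mem_degreeLT, degree_X_pow]
    exact_mod_cast hi
  rw [← mem_degreeLT, walkNumerator, ← smul_eq_C_mul, ← smul_eq_C_mul]
  exact add_mem (Submodule.smul_mem _ _ (hX (Nat.sub_one_lt hn)))
    (Submodule.smul_mem _ _ (sum_mem fun i hi ↦ hX (mem_range.1 hi)))

lemma sub_one_mul_walkNumerator (hn : n ≠ 0) :
    (X - 1) * walkNumerator n r = X ^ n - C (1 - r) * X ^ (n - 1) - C r := by
  have hgeom := mul_geom_sum (X : K[X]) n
  have hX := mul_pow_sub_one hn (X : K[X])
  rw [walkNumerator, C_sub, C_1]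
  linear_combination C r * hgeom + (1 - C r) * hX

lemma sub_one_mul_derivative_walkPoly (hn : n ≠ 0) :
    (X - 1) * derivative (walkPoly n r) =
      (n : K[X]) * (X ^ n - X ^ (n - 1)) +
        C (2 * r) * ((n : K[X]) * X ^ (n - 1) - ∑ i ∈ range n, X ^ i) := by
  have hgeom := congrArg derivative (mul_geom_sum (X : K[X]) n)
  have hX := mul_pow_sub_one hn (X : K[X])
  simp only [derivative_mul, derivative_sub, derivative_X, derivative_one, derivative_X_pow,
    sub_zero, one_mul, map_natCast] at hgeom
  simp only [walkPoly_eq_geom_sum hn, derivative_add, derivative_C_mul, derivative_sub,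
    derivative_one, derivative_X_pow, map_natCast, sub_zero, add_zero]
  linear_combination C (2 * r) * hgeom + n * hX

lemma eval_walkPoly_of_pow_eq_one (hn : n ≠ 0) {x : K} (hx : x ^ n = 1) :
    (walkPoly n r).eval x = 2 * x * (walkNumerator n r).eval x := by
  have hgeom := mul_geom_sum x n
  have hX := mul_pow_sub_one hn x
  simp only [walkPoly_eq_geom_sum hn, walkNumerator, eval_add, eval_sub, eval_mul, eval_C,
    eval_pow, eval_X, eval_one, eval_finsetSum]
  linear_combination (-2 * r) * hgeom - 2 * (1 - r) * hX - hx

lemma eval_walkPoly_ne_zero_of_pow_eq_one (hn : n ≠ 0) (h2 : (2 : K) ≠ 0) (hr1 : r ≠ 1)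
    (hr2 : 1 + r * (n - 1) ≠ 0) {x : K} (hx : x ^ n = 1) : (walkPoly n r).eval x ≠ 0 := by
  have heval : (walkPoly n r).eval x = 2 * (1 + r * (∑ i ∈ range n, x ^ i - 1)) := by
    simp only [walkPoly_eq_geom_sum hn, eval_add, eval_sub, eval_mul, eval_C, eval_pow, eval_X,
      eval_one, eval_finsetSum]
    linear_combination hx
  rw [heval]
  refine mul_ne_zero h2 ?_
  by_cases h1 : x = 1
  · simpa [h1] using hr2
  · have hgeom : ∑ i ∈ range n, x ^ i = 0 := by
      rw [geom_sum_eq h1, hx, sub_self, zero_div]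
    rw [hgeom]
    intro h
    exact hr1 (by linear_combination -h)

/-- The partial fraction expansion at `z⁻¹` of `X * walkNumerator n r / walkPoly n r`, which takes
the value `1 / 2` at every `n`-th root of unity. -/
lemma sum_residue_div_one_sub_mul {ν : Fin n → K} (hn : n ≠ 0)
    (hν : Function.Injective ν) (hnodal : Lagrange.nodal univ ν = walkPoly n r) {z : K}
    (hz : z ^ n = 1) (hPz : (walkPoly n r).eval z⁻¹ ≠ 0) :
    ∑ i, 2 * ((walkNumerator n r).eval (ν i) / (derivative (walkPoly n r)).eval (ν i)) /
      (1 - z * ν i) = 1 := by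
  have hz0 : z ≠ 0 := fun h ↦ by simp [h, hn] at hz
  have hzν (i : Fin n) : z⁻¹ ≠ ν i := fun h ↦ hPz <| by
    rw [← hnodal, h, Lagrange.eval_nodal_at_node (mem_univ i)]
  have hexpand := sum_eval_div_derivative_nodal_div_sub (s := univ) hν.injOn
    (by simpa only [card_univ, Fintype.card_fin] using degree_walkNumerator_lt (r := r) hn)
    fun i _ ↦ hzν i
  have hterm (c : K) (i : Fin n) : 2 * c / (1 - z * ν i) = 2 * z⁻¹ * (c / (z⁻¹ - ν i)) := by
    rw [show 1 - z * ν i = z * (z⁻¹ - ν i) by rw [mul_sub, mul_inv_cancel₀ hz0]]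
    have := sub_ne_zero.2 (hzν i)
    field_simp
  simp_rw [hterm, ← mul_sum]
  rw [← hnodal, hexpand, hnodal, ← mul_div_assoc,
    ← eval_walkPoly_of_pow_eq_one hn (by rw [inv_pow, hz, inv_one]), div_self hPz]

lemma one_sub_mul_ne_zero_of_pow_eq_one {z x : K} (hz : z ^ n = 1) (hx : x ^ n ≠ 1) :
    1 - z * x ≠ 0 := fun h ↦ hx <| by
  simpa [mul_pow, hz] using congrArg (· ^ n) (sub_eq_zero.1 h).symm

lemma one_sub_pow_mul_sum_div_one_sub_mul {ι : Type*} [Fintype ι] (a : ι → K) {z : ι → K}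
    (hz : ∀ y, z y ^ n = 1) {x : K} (hx : x ^ n ≠ 1) :
    (1 - x ^ n) * ∑ y, a y / (1 - z y * x) = ∑ k ∈ range n, (∑ y, a y * z y ^ k) * x ^ k := by
  have hterm (y : ι) :
      (1 - x ^ n) * (a y / (1 - z y * x)) = ∑ k ∈ range n, a y * z y ^ k * x ^ k := by
    have hne := one_sub_mul_ne_zero_of_pow_eq_one (hz y) hx
    have hgeom := mul_neg_geom_sum (z y * x) n
    rw [mul_pow, hz, one_mul] at hgeom
    simp_rw [mul_assoc, ← mul_pow, ← mul_sum]
    rw [← hgeom]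
    field_simp
  simp_rw [mul_sum, hterm, sum_mul]
  exact sum_comm

lemma sum_div_one_sub_mul_eq_half {ι : Type*} [Fintype ι] {a z : ι → K} (hn : n ≠ 0)
    (h2 : (2 : K) ≠ 0) (hz : ∀ y, z y ^ n = 1) (ha : ∑ y, a y = 1)
    (hmoment : ∀ k ∈ Icc 1 (n - 1), ∑ y, a y * z y ^ k = r) {x : K} (hx : x ^ n ≠ 1)
    (hroot : (walkPoly n r).IsRoot x) :
    ∑ y, a y / (1 - z y * x) = 1 / 2 := by
  have hsum : (1 - x ^ n) * ∑ y, a y / (1 - z y * x) = 1 + r * ∑ k ∈ Icc 1 (n - 1), x ^ k := by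
    rw [one_sub_pow_mul_sum_div_one_sub_mul a hz hx, sum_range_eq_add_sum_Icc hn, mul_sum]
    simp only [pow_zero, mul_one, ha]
    congr 1
    exact sum_congr rfl fun k hk ↦ by rw [hmoment k hk]
  have hP : x ^ n + 2 * r * ∑ i ∈ Icc 1 (n - 1), x ^ i + 1 = 0 := by
    simpa [walkPoly, eval_finsetSum] using hroot
  refine mul_left_cancel₀ (sub_ne_zero.2 hx.symm) ?_
  rw [hsum]
  field_simp
  linear_combination hP

end CharacteristicPolynomial

section ReflectionWalk

open Finset Polynomial Matrix

variable {K ι : Type*} [Field K] [Fintype ι] [DecidableEq ι]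

/-- One step of the walk: the reflection `2 u uᵀ - 1` followed by division by the phases `z`. -/
def walkMatrix (z u : ι → K) : Matrix ι ι K :=
  diagonal z⁻¹ * ((2 : K) • vecMulVec u u - 1)

lemma walkMatrix_mulVec (z u φ : ι → K) :
    walkMatrix z u *ᵥ φ = fun y ↦ (z y)⁻¹ * (2 * u y * (u ⬝ᵥ φ) - φ y) := by
  ext y
  rw [walkMatrix, ← mulVec_mulVec, mulVec_diagonal, sub_mulVec, one_mulVec, smul_mulVec,
    vecMulVec_mulVec]
  simp only [Pi.inv_apply, Pi.sub_apply, Pi.smul_apply, MulOpposite.smul_eq_mul_unop,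
    MulOpposite.unop_op, smul_eq_mul, mul_assoc]

lemma walkMatrix_one_mulVec_self {u : ι → K} (hu : ∑ y, u y ^ 2 = 1) :
    walkMatrix 1 u *ᵥ u = u := by
  have hdot : u ⬝ᵥ u = 1 := by simpa only [dotProduct, ← sq] using hu
  ext y
  simp only [walkMatrix_mulVec, hdot, Pi.one_apply]
  ring

lemma walkMatrix_mulVec_div_one_sub_mul {z u : ι → K} {x : K} (h2 : (2 : K) ≠ 0)
    (hz : ∀ y, z y ≠ 0) (hzx : ∀ y, 1 - z y * x ≠ 0)
    (hhalf : ∑ y, u y ^ 2 / (1 - z y * x) = 1 / 2) :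
    walkMatrix z u *ᵥ (fun y ↦ u y / (1 - z y * x)) = -x • fun y ↦ u y / (1 - z y * x) := by
  have hdot : (u ⬝ᵥ fun y ↦ u y / (1 - z y * x)) = 1 / 2 := by
    simpa only [dotProduct, mul_div_assoc', ← sq] using hhalf
  ext y
  rw [walkMatrix_mulVec, hdot, Pi.smul_apply, smul_eq_mul]
  have := hz y
  have := hzx y
  field_simp
  ring

lemma eq_sum_pow_smul_of_forall_succ_eq {R V κ : Type*} [CommSemiring R] [AddCommMonoid V]
    [Module R V] [Fintype κ] {T : Module.End R V} {φ : ℕ → V} (hφ : ∀ t, φ (t + 1) = T (φ t))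
    {c eig : κ → R} {v : κ → V} (hv : ∀ i, T (v i) = eig i • v i) (h0 : φ 0 = ∑ i, c i • v i)
    (t : ℕ) : φ t = ∑ i, (c i * eig i ^ t) • v i := by
  induction t with
  | zero => simpa using h0
  | succ t ih =>
    simp only [hφ, ih, map_sum, map_smul, hv, smul_smul, pow_succ, mul_assoc]

theorem walkMatrix_orbit_apply {n : ℕ} {r : K} {z u : ι → K} {ν : Fin n → K}
    (hn : n ≠ 0) (h2 : (2 : K) ≠ 0) (hr1 : r ≠ 1) (hr2 : 1 + r * (n - 1) ≠ 0)
    (hz : ∀ y, z y ^ n = 1) (hu : ∑ y, u y ^ 2 = 1)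
    (hmoment : ∀ k ∈ Icc 1 (n - 1), ∑ y, u y ^ 2 * z y ^ k = r)
    (hν : Function.Injective ν) (hnodal : Lagrange.nodal univ ν = walkPoly n r)
    {N : K} {φ : ℕ → ι → K} (h0 : φ 0 = N • u) (hφ : ∀ t, φ (t + 1) = walkMatrix z u *ᵥ φ t)
    (t : ℕ) (y : ι) :
    φ t y = (∑ i, 2 * ((walkNumerator n r).eval (ν i) /
      (derivative (walkPoly n r)).eval (ν i)) * (-ν i) ^ t / (1 - z y * ν i)) * φ 0 y := by
  have hP0 {x : K} (hx : x ^ n = 1) := eval_walkPoly_ne_zero_of_pow_eq_one hn h2 hr1 hr2 hx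
  have hroot (i : Fin n) : (walkPoly n r).IsRoot (ν i) := by
    rw [IsRoot, ← hnodal, Lagrange.eval_nodal_at_node (mem_univ i)]
  have hνn (i : Fin n) : ν i ^ n ≠ 1 := fun h ↦ hP0 h (hroot i)
  have heigen (i : Fin n) := walkMatrix_mulVec_div_one_sub_mul h2
    (fun y h ↦ by simpa [h, hn] using hz y)
    (fun y ↦ one_sub_mul_ne_zero_of_pow_eq_one (hz y) (hνn i))
    (sum_div_one_sub_mul_eq_half hn h2 hz hu hmoment (hνn i) (hroot i))
  set c : Fin n → K := fun i ↦
    2 * ((walkNumerator n r).eval (ν i) / (derivative (walkPoly n r)).eval (ν i))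
  have hc (y : ι) : ∑ i, c i / (1 - z y * ν i) = 1 :=
    sum_residue_div_one_sub_mul hn hν hnodal (hz y) (hP0 (by rw [inv_pow, hz, inv_one]))
  have hinit : φ 0 = ∑ i, (N * c i) • fun y ↦ u y / (1 - z y * ν i) := by
    ext y
    calc φ 0 y = N * u y * ∑ i, c i / (1 - z y * ν i) := by
          rw [hc, mul_one, h0, Pi.smul_apply, smul_eq_mul]
      _ = _ := by
          rw [mul_sum, Finset.sum_apply]
          exact sum_congr rfl fun i _ ↦ by rw [Pi.smul_apply, smul_eq_mul]; ring
  rw [eq_sum_pow_smul_of_forall_succ_eq (T := (walkMatrix z u).mulVecLin) hφ heigen hinit t,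
    h0, Finset.sum_apply, sum_mul]
  exact sum_congr rfl fun i _ ↦ by simp only [Pi.smul_apply, smul_eq_mul]; ring

end ReflectionWalk

section Coefficients

open Finset Polynomial Matrix

lemma one_add_mul_sub_one_ne_zero {n : ℕ} (hn : 1 < n) {ρ : ℝ} (hρ : -(1 / ((n : ℝ) - 1)) < ρ) :
    1 + (ρ : ℂ) * (n - 1) ≠ 0 := by
  have hn' : (0 : ℝ) < n - 1 := sub_pos.2 (by exact_mod_cast hn)
  have hpos : 0 < 1 + ρ * (n - 1) := by
    rw [← neg_div, div_lt_iff₀ hn'] at hρ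
    linarith
  exact_mod_cast hpos.ne'

lemma cCoef_eq_eval_div_eval_derivative {n : ℕ} (hn : n ≠ 0) (r : ℝ) {μ : ℂ} (hμ : μ ≠ -1) :
    cCoef n r μ = (walkNumerator n (r : ℂ)).eval (-μ) /
      (derivative (walkPoly n (r : ℂ))).eval (-μ) := by
  have hsub : (-1 : ℂ) ^ n * (-μ - 1) ≠ 0 := by
    refine mul_ne_zero (pow_ne_zero _ (neg_ne_zero.2 one_ne_zero)) fun h ↦ hμ ?_
    linear_combination -h
  have hnum := congrArg (eval (-μ)) (sub_one_mul_walkNumerator (r := (r : ℂ)) hn)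
  have hden := congrArg (eval (-μ)) (sub_one_mul_derivative_walkPoly (r := (r : ℂ)) hn)
  obtain ⟨m, rfl⟩ : ∃ m, n = m + 1 := Nat.exists_eq_add_one_of_ne_zero hn
  have hsq : (-1 : ℂ) ^ m * (-1) ^ m = 1 := by rw [← mul_pow]; norm_num
  simp only [eval_add, eval_sub, eval_mul, eval_C, eval_pow, eval_X, eval_one, eval_natCast,
    eval_finsetSum, add_tsub_cancel_right, sum_range_succ, neg_pow μ (m + 1), neg_pow μ m]
    at hnum hden
  rw [← mul_div_mul_left _ _ hsub, mul_assoc, hnum, mul_assoc, hden, cCoef, add_tsub_cancel_right]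
  congr 1
  · linear_combination (-μ ^ (m + 1) - (1 - r) * μ ^ m) * hsq
  · push_cast
    linear_combination (-(m + 1) * μ ^ (m + 1) - (m + 1 - 2 * r * m) * μ ^ m) * hsq

lemma nodal_neg_eq_walkPoly {n : ℕ} {r : ℂ} {μ : Fin n → ℂ}
    (hμ : ∀ z : ℂ, (-z) ^ n + 2 * r * (∑ i ∈ Icc 1 (n - 1), (-z) ^ i) + 1 =
      (-1 : ℂ) ^ n * ∏ i, (z - μ i)) :
    Lagrange.nodal univ (-μ) = walkPoly n r := by
  refine Polynomial.funext fun x ↦ ?_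
  have h := hμ (-x)
  have hprod : (-1 : ℂ) ^ n * ∏ i, (-x - μ i) = ∏ i, (x + μ i) := by
    simp_rw [← neg_add', prod_neg, card_univ, Fintype.card_fin, ← mul_assoc, ← mul_pow]
    norm_num
  rw [neg_neg, hprod] at h
  simp [walkPoly, Lagrange.eval_nodal, eval_finsetSum, h]

theorem walkMatrix_orbit_apply_cCoef {ι : Type*} [Fintype ι] [DecidableEq ι] {n : ℕ} (hn : 1 < n)
    {r : ℝ} (hlo : -(1 / ((n : ℝ) - 1)) < r) (hhi : r < 1) {z u : ι → ℂ} (hz : ∀ y, z y ^ n = 1)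
    (hu : ∑ y, u y ^ 2 = 1) (hmoment : ∀ k ∈ Icc 1 (n - 1), ∑ y, u y ^ 2 * z y ^ k = r)
    {μ : Fin n → ℂ} (hμ : ∀ x : ℂ, (-x) ^ n + 2 * r * (∑ i ∈ Icc 1 (n - 1), (-x) ^ i) + 1 =
      (-1 : ℂ) ^ n * ∏ i, (x - μ i))
    (hdist : Function.Injective μ) {N : ℂ} {φ : ℕ → ι → ℂ} (h0 : φ 0 = N • u)
    (hφ : ∀ t, φ (t + 1) = walkMatrix z u *ᵥ φ t) (t : ℕ) (y : ι) :
    φ t y = ((-(z y)⁻¹) ^ t * (1 - ∑ i, 2 * cCoef n r (μ i) / (1 + z y * μ i)) +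
      ∑ i, 2 * cCoef n r (μ i) * μ i ^ t / (1 + z y * μ i)) * φ 0 y := by
  have hn0 : n ≠ 0 := Nat.ne_zero_of_lt hn
  have hr1 : (r : ℂ) ≠ 1 := Complex.ofReal_ne_one.2 hhi.ne
  have hr2 := one_add_mul_sub_one_ne_zero hn hlo
  have hP {x : ℂ} (hx : x ^ n = 1) :=
    eval_walkPoly_ne_zero_of_pow_eq_one hn0 two_ne_zero hr1 hr2 hx
  have hnodal := nodal_neg_eq_walkPoly hμ
  have hν : Function.Injective (-μ) := neg_injective.comp hdist
  have hcoef (i : Fin n) : cCoef n r (μ i) = (walkNumerator n (r : ℂ)).eval (-μ i) /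
      (derivative (walkPoly n (r : ℂ))).eval (-μ i) :=
    cCoef_eq_eval_div_eval_derivative hn0 r fun h ↦ hP (one_pow n) <| by
      rw [← hnodal, show (1 : ℂ) = (-μ) i by rw [Pi.neg_apply, h, neg_neg],
        Lagrange.eval_nodal_at_node (mem_univ i)]
  have hresidue : ∑ i, 2 * cCoef n r (μ i) / (1 + z y * μ i) = 1 := by
    simpa only [← hcoef, Pi.neg_apply, mul_neg, sub_neg_eq_add] using
      sum_residue_div_one_sub_mul hn0 hν hnodal (hz y) (hP (by rw [inv_pow, hz, inv_one]))
  rw [hresidue, sub_self, mul_zero, zero_add]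
  simpa only [← hcoef, Pi.neg_apply, mul_neg, sub_neg_eq_add, neg_neg] using
    walkMatrix_orbit_apply hn0 two_ne_zero hr1 hr2 hz hu hmoment hν hnodal h0 hφ t y

end Coefficients

section FourierTransform

open Finset Matrix

variable {n d : ℕ} {w : ℕ → ℝ}

lemma walkMatrix_phase_amplitude_mulVec [NeZero n] (hn : 1 < n)
    (hw : ∀ i ∈ range (d + 1), 0 ≤ w i) (ξ : Fin d → ZMod n) (φ : (Fin d → ZMod n) → ℂ) :
    walkMatrix (phase ξ) (amplitude n d w) *ᵥ φ =
      fun y ↦ (phase ξ y)⁻¹ * ∑ y', (coin n d w y y' : ℂ) * φ y' := by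
  ext y
  simp only [walkMatrix_mulVec, coin_eq_amplitude hn hw, sub_mul, ite_mul, one_mul, zero_mul,
    sum_sub_distrib, sum_ite_eq, mem_univ, if_true, dotProduct, mul_sum, mul_assoc]

lemma sum_amplitude_sq [NeZero n] (hn : 1 < n) (hw : ∀ i ∈ range (d + 1), 0 ≤ w i)
    (hsum : ∑ i ∈ range (d + 1), w i = 1) : ∑ y, amplitude n d w y ^ 2 = 1 := by
  simp_rw [amplitude_sq hn hw, sum_stepProb hn hsum]

lemma sum_amplitude_sq_mul_phase_pow [Fact n.Prime] (hw : ∀ i ∈ range (d + 1), 0 ≤ w i)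
    (ξ : Fin d → ZMod n) {k : ℕ} (hk : k ∈ Icc 1 (n - 1)) :
    ∑ y, amplitude n d w y ^ 2 * phase ξ y ^ k = walkEigenvalue n d w (hammingNorm ξ) := by
  simp_rw [amplitude_sq (Fact.out : n.Prime).one_lt hw, sum_stepProb_mul_phase_pow ξ hk]

end FourierTransform

/-- solution of the decoupled Fourier-transformed quantum-walk system.
For fixed `ξ ≠ 0` with `-1/(n-1) < ρ_{|ξ|} < 1`, if `μ^{(1)},…,μ^{(n)}` are the (pairwise
distinct) zeros of `(-z)^n + 2ρ_{|ξ|}Σ_{i=1}^{n-1}(-z)^i + 1`, then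
`ψ̃_{y,ξ}(t) = [(-η^{-ξ·y})^t (1 - Σᵢ 2c⁽ⁱ⁾/(1+η^{ξ·y}μ⁽ⁱ⁾)) + Σᵢ 2c⁽ⁱ⁾(μ⁽ⁱ⁾)^t/(1+η^{ξ·y}μ⁽ⁱ⁾)]·ψ̃_{y,ξ}(0)`,
and moreover `ψ̃_{y,0}(t) = ψ̃_{y,0}(0)`.
(The instance `[NeZero n]` is automatic from primality of `n`.) -/
theorem fourier_wave_vector (n d : ℕ) (hn : n.Prime) [NeZero n] (hd : 2 ≤ d) (η : ℂ)
    (hη : η = Complex.exp (2 * Real.pi * Complex.I / n))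
    (w : ℕ → ℝ) (hw : ∀ i ∈ Finset.range (d + 1), 0 ≤ w i)
    (hsum : ∑ i ∈ Finset.range (d + 1), w i = 1)
    (ρ : ℕ → ℝ) (hρ : ∀ i, ρ i = ∑ j ∈ Finset.range (d + 1), w j / kap n d j * kraw n d j i)
    (ψ : ℕ → (Fin d → ZMod n) → (Fin d → ZMod n) → ℂ)
    (hψ0 : ∀ (y ξ : Fin d → ZMod n), ψ 0 y ξ =
      (((Real.sqrt ((n : ℝ) ^ d))⁻¹ *
        Real.sqrt (w (hammingNorm y) / kap n d (hammingNorm y)) : ℝ) : ℂ))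
    (hψ : ∀ (t : ℕ) (y ξ : Fin d → ZMod n), ψ (t + 1) y ξ =
      (η ^ (∑ j, ξ j * y j).val)⁻¹ * ∑ y', ((coin n d w y y' : ℝ) : ℂ) * ψ t y' ξ)
    (ξ : Fin d → ZMod n) (hξ : ξ ≠ 0)
    (hlo : -(1 / ((n : ℝ) - 1)) < ρ (hammingNorm ξ)) (hhi : ρ (hammingNorm ξ) < 1)
    (μ : Fin n → ℂ)
    (hμ : ∀ z : ℂ,
      (-z) ^ n + 2 * (ρ (hammingNorm ξ) : ℂ) * (∑ i ∈ Finset.Icc 1 (n - 1), (-z) ^ i) + 1 =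
        (-1 : ℂ) ^ n * ∏ i, (z - μ i))
    (hdist : Function.Injective μ) :
    (∀ (t : ℕ) (y : Fin d → ZMod n), ψ t y ξ =
      ((-(η ^ (∑ j, ξ j * y j).val)⁻¹) ^ t *
          (1 - ∑ i, 2 * cCoef n (ρ (hammingNorm ξ)) (μ i) /
            (1 + η ^ (∑ j, ξ j * y j).val * μ i)) +
        ∑ i, 2 * cCoef n (ρ (hammingNorm ξ)) (μ i) * μ i ^ t /
          (1 + η ^ (∑ j, ξ j * y j).val * μ i)) * ψ 0 y ξ) ∧
    (∀ (t : ℕ) (y : Fin d → ZMod n), ψ t y 0 = ψ 0 y 0) := by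
  have := Fact.mk hn
  obtain rfl : ρ = walkEigenvalue n d w := funext hρ
  simp only [hη, exp_pow_val_eq_stdAddChar] at hψ ⊢
  have hinit (ξ : Fin d → ZMod n) :
      (fun y ↦ ψ 0 y ξ) = (((√((n : ℝ) ^ d))⁻¹ : ℝ) : ℂ) • amplitude n d w :=
    funext fun y ↦ (hψ0 y ξ).trans (Complex.ofReal_mul _ _)
  have hstep (ξ : Fin d → ZMod n) (t : ℕ) : (fun y ↦ ψ (t + 1) y ξ) =
      (walkMatrix (phase ξ) (amplitude n d w)).mulVec fun y ↦ ψ t y ξ :=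
    (funext (hψ t · ξ)).trans (walkMatrix_phase_amplitude_mulVec hn.one_lt hw ξ _).symm
  have hunit := sum_amplitude_sq hn.one_lt hw hsum
  refine ⟨walkMatrix_orbit_apply_cCoef (φ := fun t y ↦ ψ t y ξ) hn.one_lt hlo hhi
    (phase_pow_card ξ) hunit (fun k ↦ sum_amplitude_sq_mul_phase_pow hw ξ) hμ hdist
    (hinit ξ) (hstep ξ), fun t ↦ congrFun (?_ : (fun y ↦ ψ t y 0) = fun y ↦ ψ 0 y 0)⟩
  induction t with
  | zero => rfl
  | succ t ih =>
    rw [hstep, ih, hinit, Matrix.mulVec_smul, phase_zero, walkMatrix_one_mulVec_self hunit]
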